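/- On an open subset of ℝ³ with coordinates (x¹, x², x³) = (x, y, z), let (g_{ij}) be a smooth Riemannian metric and let ρ, p be smooth functions. Define the symmetric tensor field T^{ij} := ρ·δ^i_z δ^j_z + p·g^{ij}, i.e. T^{33} = ρ + p g^{33} and T^{ij} = p g^{ij} for all other index pairs. Then the momentum constraint ∇_j T_i^{ j} = 0 (for i = 1,2,3) holds if and only if for each i = 1,2,3: ∂_z(ρ|g| g_{i3}) = |g|·((1/2)ρ ∂_i g_{33} − ∂_i p), where |g| = (det(g_{ij}))^{1/2}. -/

import Mathlib

open Matrix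

noncomputable section

abbrev V3 := Fin 3 → ℝ

/-- Partial derivative `∂ᵢ f` on `ℝ³`. -/
def pd (i : Fin 3) (f : V3 → ℝ) (x : V3) : ℝ := fderiv ℝ f x (Pi.single i 1)

/-- Christoffel symbols `Γ^i_{jk} = (1/2) g^{il}(∂_j g_{lk} + ∂_k g_{jl} - ∂_l g_{jk})`. -/
def christoffel (g : V3 → Matrix (Fin 3) (Fin 3) ℝ) (i j k : Fin 3) (x : V3) : ℝ :=
  (1 / 2) * ∑ l, (g x)⁻¹ i l *
    (pd j (fun y => g y l k) x + pd k (fun y => g y j l) x - pd l (fun y => g y j k) x)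

/-- `|g| = (det g)^{1/2}`. -/
def sqrtDet (g : V3 → Matrix (Fin 3) (Fin 3) ℝ) (x : V3) : ℝ := Real.sqrt (g x).det

/-- Covariant divergence of a contravariant symmetric 2-tensor:
`∇_j T^{ij} = |g|⁻¹ ∂_j(|g| T^{ij}) + Γ^i_{jk} T^{jk}`. -/
def covDivUp (g T : V3 → Matrix (Fin 3) (Fin 3) ℝ) (i : Fin 3) (x : V3) : ℝ :=
  (sqrtDet g x)⁻¹ * (∑ j, pd j (fun y => sqrtDet g y * T y i j) x) +
    ∑ j, ∑ k, christoffel g i j k x * T x j k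

/-- Covariant divergence in mixed form, for a contravariant tensor `T^{ij}`:
`∇_j T_i^{ j} = |g|⁻¹ ∂_j(|g| g_{ik} T^{kj}) - (1/2) T^{jk} ∂_i g_{jk}`. -/
def covDivLow (g T : V3 → Matrix (Fin 3) (Fin 3) ℝ) (i : Fin 3) (x : V3) : ℝ :=
  (sqrtDet g x)⁻¹ * (∑ j, pd j (fun y => sqrtDet g y * (∑ k, g y i k * T y k j)) x) -
    (1 / 2) * ∑ j, ∑ k, T x j k * pd i (fun y => g y j k) x

/-!
The covariant divergence is additive, so the two summands of `T` can be treated separately. Since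
`g_{ik} ρ δ^k_z δ^j_z = ρ g_{iz} δ^j_z`, the first contributes
`|g|⁻¹ ∂_z(ρ|g|g_{iz}) - (1/2) ρ ∂_i g_{zz}`. The second is `p` times the inverse metric, with
mixed form `p δ_i^j`; by Jacobi's formula `∂_i|g| = (1/2)|g| g^{jk} ∂_i g_{jk}`, the derivatives of
the metric cancel and only `∂_i p` remains. Multiplying by `|g| > 0` gives the equivalence.
-/

section MatrixAlgebra

variable {n R : Type*} [Fintype n] [DecidableEq n] [CommRing R]

theorem mul_single_apply_eq_ite {k l m S : Type*} [NonUnitalNonAssocSemiring S] [Fintype m]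
    [DecidableEq m] [DecidableEq k] (M : Matrix l m S) (a : m) (b : k) (c : S) (i : l) (j : k) :
    (M * single a b c) i j = if b = j then M i a * c else 0 := by
  simp [mul_apply, single_apply, ite_and]

theorem mul_smul_inv_apply_eq_ite {A : Matrix n n R} (hA : IsUnit A.det) (c : R) (i j : n) :
    (A * (c • A⁻¹)) i j = if i = j then c else 0 := by
  simp [mul_nonsing_inv A hA, one_apply]

theorem det_updateRow_eq_sum_mul_adjugate (A : Matrix n n R) (i : n) (b : n → R) :
    (A.updateRow i b).det = ∑ j, b j * A.adjugate j i := by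
  rw [det_eq_sum_mul_adjugate_row _ i]
  simp only [updateRow_self, adjugate_apply, updateRow_idem]

end MatrixAlgebra

section Jacobi

variable {𝕜 n E : Type*} [NontriviallyNormedField 𝕜] [Fintype n] [DecidableEq n]
  [NormedAddCommGroup E] [NormedSpace 𝕜 E]

/-- The determinant as a continuous multilinear map of the rows, so that its derivative
is the sum over the rows of the determinants with that row replaced by its derivative. -/
def detRowContinuousMultilinear (𝕜 n : Type*) [NontriviallyNormedField 𝕜] [Fintype n]
    [DecidableEq n] : ContinuousMultilinearMap 𝕜 (fun _ : n => n → 𝕜) 𝕜 where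
  toMultilinearMap := (detRowAlternating (R := 𝕜) (n := n)).toMultilinearMap
  cont := continuous_id.matrix_det

theorem hasFDerivAt_det {A : E → Matrix n n 𝕜} {A' : n → n → E →L[𝕜] 𝕜} {x : E}
    (hA : ∀ i j, HasFDerivAt (fun y => A y i j) (A' i j) x) :
    HasFDerivAt (fun y => (A y).det) (∑ i, ∑ j, (A x).adjugate j i • A' i j) x := by
  have hrows : HasFDerivAt (fun y => (A y).row)
      (ContinuousLinearMap.pi fun i => ContinuousLinearMap.pi (A' i)) x :=
    hasFDerivAt_pi.2 fun i => hasFDerivAt_pi.2 (hA i)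
  refine (((detRowContinuousMultilinear 𝕜 n).hasFDerivAt (A x).row).comp x hrows).congr_fderiv ?_
  ext v
  calc (detRowContinuousMultilinear 𝕜 n).linearDeriv (A x).row (fun i j => A' i j v)
      = ∑ i, ((A x).updateRow i fun j => A' i j v).det :=
        ContinuousMultilinearMap.linearDeriv_apply _ _ _
    _ = ∑ i, ∑ j, A' i j v * (A x).adjugate j i :=
        Finset.sum_congr rfl fun i _ => det_updateRow_eq_sum_mul_adjugate (A x) i _
    _ = (∑ i, ∑ j, (A x).adjugate j i • A' i j) v := by
        simp [mul_comm]

end Jacobi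

section PartialDerivative

variable {f h : V3 → ℝ} {x : V3}

theorem pd_congr (hfh : f =ᶠ[nhds x] h) (i : Fin 3) : pd i f x = pd i h x := by
  rw [pd, pd, hfh.fderiv_eq]

theorem pd_add (hf : DifferentiableAt ℝ f x) (hh : DifferentiableAt ℝ h x) (i : Fin 3) :
    pd i (fun y => f y + h y) x = pd i f x + pd i h x := by
  simp only [pd, fderiv_fun_add hf hh, _root_.add_apply]

theorem pd_mul (hf : DifferentiableAt ℝ f x) (hh : DifferentiableAt ℝ h x) (i : Fin 3) :
    pd i (fun y => f y * h y) x = f x * pd i h x + h x * pd i f x := by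
  simp only [pd, fderiv_fun_mul hf hh, _root_.add_apply, _root_.smul_apply, smul_eq_mul]

theorem pd_mul_ite_zero (P : Prop) [Decidable P] (i : Fin 3) :
    pd i (fun y => f y * if P then h y else 0) x =
      if P then pd i (fun y => f y * h y) x else 0 := by
  split_ifs <;> simp [pd]

end PartialDerivative

section CovariantDivergence

variable {g A B : V3 → Matrix (Fin 3) (Fin 3) ℝ} {p : V3 → ℝ} {x : V3}

theorem sqrtDet_pos (hdet : 0 < (g x).det) : 0 < sqrtDet g x :=
  Real.sqrt_pos.2 hdet

theorem hasFDerivAt_sqrtDet {g' : Fin 3 → Fin 3 → V3 →L[ℝ] ℝ}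
    (hg : ∀ i j, HasFDerivAt (fun y => g y i j) (g' i j) x) (hdet : 0 < (g x).det) :
    HasFDerivAt (sqrtDet g) ((1 / 2 * sqrtDet g x) • ∑ i, ∑ j, (g x)⁻¹ j i • g' i j) x := by
  refine ((hasFDerivAt_det hg).sqrt hdet.ne').congr_fderiv ?_
  have hinv (i j : Fin 3) : (g x)⁻¹ j i = (g x).det⁻¹ * (g x).adjugate j i := by
    simp only [inv_def, Ring.inverse_eq_inv', Matrix.smul_apply, smul_eq_mul]
  have hcoeff : 1 / (2 * √(g x).det) = 1 / 2 * √(g x).det * (g x).det⁻¹ := by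
    rw [mul_assoc, ← div_eq_mul_inv, Real.sqrt_div_self', one_div_mul_one_div]
  have hsum : ∑ i, ∑ j, (g x)⁻¹ j i • g' i j =
      (g x).det⁻¹ • ∑ i, ∑ j, (g x).adjugate j i • g' i j := by
    simp only [hinv, Finset.smul_sum, mul_smul]
  rw [hsum, hcoeff, sqrtDet, smul_smul]

theorem differentiableAt_sqrtDet (hg : ∀ i j, DifferentiableAt ℝ (fun y => g y i j) x)
    (hdet : 0 < (g x).det) : DifferentiableAt ℝ (sqrtDet g) x :=
  (hasFDerivAt_sqrtDet (fun i j => (hg i j).hasFDerivAt) hdet).differentiableAt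

theorem pd_sqrtDet (hg : ∀ i j, DifferentiableAt ℝ (fun y => g y i j) x) (hdet : 0 < (g x).det)
    (i : Fin 3) :
    pd i (sqrtDet g) x =
      1 / 2 * sqrtDet g x * ∑ j, ∑ k, (g x)⁻¹ k j * pd i (fun y => g y j k) x := by
  simp [pd, (hasFDerivAt_sqrtDet (fun i j => (hg i j).hasFDerivAt) hdet).fderiv]

theorem covDivLow_eq_mixed (g T : V3 → Matrix (Fin 3) (Fin 3) ℝ) (i : Fin 3) (x : V3) :
    covDivLow g T i x =
      (sqrtDet g x)⁻¹ * (∑ j, pd j (fun y => sqrtDet g y * (g y * T y) i j) x) -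
        (1 / 2) * ∑ j, ∑ k, T x j k * pd i (fun y => g y j k) x := by
  simp only [covDivLow, mul_apply]

theorem covDivLow_add (i : Fin 3) (hg : DifferentiableAt ℝ (sqrtDet g) x)
    (hA : ∀ j, DifferentiableAt ℝ (fun y => (g y * A y) i j) x)
    (hB : ∀ j, DifferentiableAt ℝ (fun y => (g y * B y) i j) x) :
    covDivLow g (fun y => A y + B y) i x = covDivLow g A i x + covDivLow g B i x := by
  have hflux (j : Fin 3) : pd j (fun y => sqrtDet g y * (g y * (A y + B y)) i j) x =
      pd j (fun y => sqrtDet g y * (g y * A y) i j) x +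
        pd j (fun y => sqrtDet g y * (g y * B y) i j) x := by
    simp only [mul_add, Matrix.add_apply]
    exact pd_add (hg.fun_mul (hA j)) (hg.fun_mul (hB j)) j
  simp only [covDivLow_eq_mixed, hflux, Matrix.add_apply, add_mul, Finset.sum_add_distrib]
  ring

theorem covDivLow_single (g : V3 → Matrix (Fin 3) (Fin 3) ℝ) (ρ : V3 → ℝ) (a b i : Fin 3)
    (x : V3) :
    covDivLow g (fun y => single a b (ρ y)) i x =
      (sqrtDet g x)⁻¹ * pd b (fun y => ρ y * sqrtDet g y * g y i a) x -
        1 / 2 * ρ x * pd i (fun y => g y a b) x := by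
  have hflux (y : V3) : sqrtDet g y * (g y i a * ρ y) = ρ y * sqrtDet g y * g y i a := by ring
  have hcontract : ∑ j, ∑ k, single a b (ρ x) j k * pd i (fun y => g y j k) x =
      ρ x * pd i (fun y => g y a b) x := by
    simp [single_apply, ite_and]
  simp only [covDivLow_eq_mixed, mul_single_apply_eq_ite, pd_mul_ite_zero, hflux,
    Finset.sum_ite_eq, Finset.mem_univ, if_true, hcontract, mul_assoc]

theorem eventually_mixed_smul_inv (p : V3 → ℝ)
    (hg : ∀ i j, DifferentiableAt ℝ (fun y => g y i j) x) (hdet : (g x).det ≠ 0) (i j : Fin 3) :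
    (fun y => (g y * (p y • (g y)⁻¹)) i j) =ᶠ[nhds x] fun y => if i = j then p y else 0 := by
  have hcont : ContinuousAt (fun y => (g y).det) x :=
    (hasFDerivAt_det fun i j => (hg i j).hasFDerivAt).continuousAt
  filter_upwards [hcont.eventually_ne hdet] with y hy
  exact mul_smul_inv_apply_eq_ite hy.isUnit (p y) i j

theorem covDivLow_smul_inv (hg : ∀ i j, DifferentiableAt ℝ (fun y => g y i j) x)
    (hdet : 0 < (g x).det) (hsymm : (g x).IsSymm) (hp : DifferentiableAt ℝ p x) (i : Fin 3) :
    covDivLow g (fun y => p y • (g y)⁻¹) i x = pd i p x := by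
  have hflux (j : Fin 3) : pd j (fun y => sqrtDet g y * (g y * (p y • (g y)⁻¹)) i j) x =
      if i = j then pd j (fun y => sqrtDet g y * p y) x else 0 := by
    rw [← pd_mul_ite_zero]
    refine pd_congr ?_ j
    filter_upwards [eventually_mixed_smul_inv p hg hdet.ne' i j] with y hy
    rw [hy]
  have hdensity : pd i (fun y => sqrtDet g y * p y) x = sqrtDet g x *
      (pd i p x + 1 / 2 * p x * ∑ j, ∑ k, (g x)⁻¹ j k * pd i (fun y => g y j k) x) := by
    simp only [pd_mul (differentiableAt_sqrtDet hg hdet) hp, pd_sqrtDet hg hdet,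
      hsymm.inv.apply]
    ring
  have hcontract : ∑ j, ∑ k, (p x • (g x)⁻¹) j k * pd i (fun y => g y j k) x =
      p x * ∑ j, ∑ k, (g x)⁻¹ j k * pd i (fun y => g y j k) x := by
    simp only [Matrix.smul_apply, smul_eq_mul, mul_assoc, Finset.mul_sum]
  rw [covDivLow_eq_mixed, hcontract]
  simp only [hflux, Finset.sum_ite_eq, Finset.mem_univ, if_true]
  rw [hdensity, inv_mul_cancel_left₀ (sqrtDet_pos hdet).ne']
  ring

theorem covDivLow_single_add_smul_inv {ρ : V3 → ℝ}
    (hg : ∀ i j, DifferentiableAt ℝ (fun y => g y i j) x) (hdet : 0 < (g x).det)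
    (hsymm : (g x).IsSymm) (hρ : DifferentiableAt ℝ ρ x) (hp : DifferentiableAt ℝ p x)
    (a b i : Fin 3) :
    covDivLow g (fun y => single a b (ρ y) + p y • (g y)⁻¹) i x =
      (sqrtDet g x)⁻¹ * pd b (fun y => ρ y * sqrtDet g y * g y i a) x -
        1 / 2 * ρ x * pd i (fun y => g y a b) x + pd i p x := by
  have hsingle (j : Fin 3) : DifferentiableAt ℝ (fun y => (g y * single a b (ρ y)) i j) x := by
    simp only [mul_single_apply_eq_ite]
    split_ifs
    · exact (hg i a).mul hρ
    · exact differentiableAt_const 0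
  have hinv (j : Fin 3) : DifferentiableAt ℝ (fun y => (g y * (p y • (g y)⁻¹)) i j) x := by
    refine DifferentiableAt.congr_of_eventuallyEq ?_ (eventually_mixed_smul_inv p hg hdet.ne' i j)
    split_ifs
    · exact hp
    · exact differentiableAt_const 0
  rw [covDivLow_add i (differentiableAt_sqrtDet hg hdet) hsingle hinv, covDivLow_single,
    covDivLow_smul_inv hg hdet hsymm hp]

theorem momentum_constraint_uu_case_general {ρ : V3 → ℝ}
    (hg : ∀ i j, DifferentiableAt ℝ (fun y => g y i j) x) (hdet : 0 < (g x).det)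
    (hsymm : (g x).IsSymm) (hρ : DifferentiableAt ℝ ρ x) (hp : DifferentiableAt ℝ p x)
    (a i : Fin 3) :
    covDivLow g (fun y => of fun j k =>
        (if j = a ∧ k = a then ρ y else 0) + p y * (g y)⁻¹ j k) i x = 0 ↔
      pd a (fun y => ρ y * sqrtDet g y * g y i a) x =
        sqrtDet g x * ((1 / 2) * ρ x * pd i (fun y => g y a a) x - pd i p x) := by
  have htensor : (fun y => of fun j k => (if j = a ∧ k = a then ρ y else 0) + p y * (g y)⁻¹ j k) =
      fun y => single a a (ρ y) + p y • (g y)⁻¹ := by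
    ext y j k
    simp only [of_apply, Matrix.add_apply, single_apply, Matrix.smul_apply, smul_eq_mul,
      eq_comm (a := a)]
  rw [htensor, covDivLow_single_add_smul_inv hg hdet hsymm hρ hp, sub_add, sub_eq_zero,
    inv_mul_eq_iff_eq_mul₀ (sqrtDet_pos hdet).ne']

end CovariantDivergence

/-- **Equation (3) in the proof of Proposition 3.2**: for
`T^{ij} = ρ δ^i_z δ^j_z + p g^{ij}` (coordinates `(x,y,z) = (x¹,x²,x³)`, index `z = 2`),
the momentum constraint `∇_j T_i^{ j} = 0` holds iff
`(ρ|g|g_{iz})_{,z} = |g| ((1/2) ρ g_{zz,i} - p_{,i})` for each `i`. -/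
theorem momentum_constraint_uu_case
    (U : Set V3) (hU : IsOpen U)
    (g : V3 → Matrix (Fin 3) (Fin 3) ℝ) (ρ p : V3 → ℝ)
    (hg_smooth : ∀ i j, ContDiffOn ℝ (⊤ : ℕ∞) (fun x => g x i j) U)
    (hg_pos : ∀ x ∈ U, (g x).PosDef)
    (hρ : ContDiffOn ℝ (⊤ : ℕ∞) ρ U) (hp : ContDiffOn ℝ (⊤ : ℕ∞) p U) :
    let T : V3 → Matrix (Fin 3) (Fin 3) ℝ := fun x =>
      Matrix.of fun i j =>
        (if i = 2 ∧ j = 2 then ρ x else 0) + p x * (g x)⁻¹ i j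
    ∀ x ∈ U, ∀ i,
      (covDivLow g T i x = 0 ↔
        pd 2 (fun y => ρ y * sqrtDet g y * g y i 2) x =
          sqrtDet g x * ((1 / 2) * ρ x * pd i (fun y => g y 2 2) x - pd i p x)) := by
  intro _ x hx
  have hdiff {f : V3 → ℝ} (hf : ContDiffOn ℝ (⊤ : ℕ∞) f U) : DifferentiableAt ℝ f x :=
    (hf.contDiffAt (hU.mem_nhds hx)).differentiableAt (by simp)
  have hsymm : (g x).IsSymm := isHermitian_iff_isSymm.1 (hg_pos x hx).isHermitian
  exact momentum_constraint_uu_case_general (fun i j => hdiff (hg_smooth i j))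
    (hg_pos x hx).det_pos hsymm (hdiff hρ) (hdiff hp) 2
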